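/- The cubic R³ − R² − R − 1 = 0 has exactly one positive real root, namely R₀ = 1/3 + (1/3)·∛(19 + 3√33) + (1/3)·∛(19 − 3√33) (R₀ ≈ 1.839), and for all real x, y with 0 < x < R₀ and 0 < y < R₀ one has 2β(x,y) < α(x,y) < 1. -/

import Mathlib

/-- The auxiliary function `α(x,y) = -d₁(x,y)/d₀(x,y)` of the BDF3 analysis. -/
noncomputable def alphaF (x y : ℝ) : ℝ :=
  x*(x^2*y^2 + 4*x*y^2 + 3*y^2 + 2*x*y + 3*y + 1) /
    ((y + 1)*(3*x^2*y + 4*x*y + 2*x + y + 1))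

/-- The auxiliary function `β(x,y) = d₂(x,y)/d₀(x,y)` of the BDF3 analysis. -/
noncomputable def betaF (x y : ℝ) : ℝ :=
  x*(x + 1)^2*y^2 / ((y + 1)*(3*x^2*y + 4*x*y + 2*x + y + 1))

/-!
Write `f(x, y) = (1 + y)² + xy - (xy)²`, and let `D` be the common denominator of `α` and `β`. Then
`1 - α = (x + 1) f / D` and `α - 2β = x (f + (x + 1) y) / D`, so both inequalities follow from
`0 < f`. Now `f` is concave in `x` with `f(0, y) > 0`, and at a root `R` of the cubic
`R f(R, y) = (R - y) (1 + (R² + 1) y)`, which is nonnegative for `0 ≤ y ≤ R`.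

The root itself is Cardano's, since the cubic is `t³ = 12 t + 38` in `t = 3R - 1`. It is the only
positive one because the equation reads `1 = 1/R + 1/R² + 1/R³`, whose right side is decreasing.
-/

section OrderedRing

variable {K : Type*} [CommRing K] [LinearOrder K] [IsStrictOrderedRing K] {R x y : K}

lemma eq_of_pos_of_cubic_eq_zero (hx : 0 < x) (hy : 0 < y) (hx_root : x ^ 3 - x ^ 2 - x - 1 = 0)
    (hy_root : y ^ 3 - y ^ 2 - y - 1 = 0) : x = y := by
  have factored :
      (x - y) * ((x * y) ^ 2 + x * y * (x + y) + (x ^ 2 + x * y + y ^ 2)) = 0 := by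
    linear_combination y ^ 3 * hx_root - x ^ 3 * hy_root
  have cofactor_pos : 0 < (x * y) ^ 2 + x * y * (x + y) + (x ^ 2 + x * y + y ^ 2) := by
    positivity
  exact sub_eq_zero.1 ((mul_eq_zero.1 factored).resolve_right cofactor_pos.ne')

lemma sq_root_mul_le (hR : 0 < R) (hR_root : R ^ 3 - R ^ 2 - R - 1 = 0) (hy : 0 ≤ y)
    (hyR : y ≤ R) : (R * y) ^ 2 ≤ (1 + y) ^ 2 + R * y := by
  have factored :
      R * ((1 + y) ^ 2 + R * y - (R * y) ^ 2) = (R - y) * (1 + (R ^ 2 + 1) * y) := by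
    linear_combination (-y - y ^ 2) * hR_root
  have nonneg : 0 ≤ (R - y) * (1 + (R ^ 2 + 1) * y) :=
    mul_nonneg (sub_nonneg.2 hyR) (by positivity)
  exact sub_nonneg.1 (nonneg_of_mul_nonneg_right (factored ▸ nonneg) hR)

lemma sq_mul_lt_of_lt_root (hR_root : R ^ 3 - R ^ 2 - R - 1 = 0) (hx : 0 ≤ x) (hxR : x < R)
    (hy : 0 ≤ y) (hyR : y ≤ R) : (x * y) ^ 2 < (1 + y) ^ 2 + x * y := by
  have hR : 0 < R := hx.trans_lt hxR
  have edge_nonneg : 0 ≤ (1 + y) ^ 2 + R * y - (R * y) ^ 2 :=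
    sub_nonneg.2 (sq_root_mul_le hR hR_root hy hyR)
  -- Concavity in `x`: the chord from `0` to `R` plus a nonnegative defect.
  have chord : R * ((1 + y) ^ 2 + x * y - (x * y) ^ 2) =
      (R - x) * (1 + y) ^ 2 + x * ((1 + y) ^ 2 + R * y - (R * y) ^ 2) +
        R * x * (R - x) * y ^ 2 := by
    ring
  have scaled_pos : 0 < R * ((1 + y) ^ 2 + x * y - (x * y) ^ 2) := by
    have := sub_pos.2 hxR
    rw [chord]
    positivity
  exact sub_pos.1 (pos_of_mul_pos_right scaled_pos hR.le)

end OrderedRing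

section Cardano

open Real

lemma rpow_one_third_add_pow_three {u v : ℝ} (hu : 0 ≤ u) (hv : 0 ≤ v) :
    (u ^ ((1 : ℝ) / 3) + v ^ ((1 : ℝ) / 3)) ^ 3 =
      3 * (u * v) ^ ((1 : ℝ) / 3) * (u ^ ((1 : ℝ) / 3) + v ^ ((1 : ℝ) / 3)) + (u + v) := by
  have cube_rpow {w : ℝ} (hw : 0 ≤ w) : (w ^ ((1 : ℝ) / 3)) ^ 3 = w := by
    simpa using rpow_inv_natCast_pow hw three_ne_zero
  rw [mul_rpow hu hv]
  linear_combination cube_rpow hu + cube_rpow hv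

lemma three_mul_sqrt_thirtyThree_lt : 3 * √33 < 19 := by
  have : √33 < 19 / 3 := (sqrt_lt' (by norm_num)).2 (by norm_num)
  linarith

lemma cardano_root_pos :
    0 < 1 / 3 + (1 / 3) * (19 + 3 * √33) ^ ((1 : ℝ) / 3) +
      (1 / 3) * (19 - 3 * √33) ^ ((1 : ℝ) / 3) := by
  have := sub_pos.2 three_mul_sqrt_thirtyThree_lt
  positivity

lemma cubic_cardano_root_eq_zero {R : ℝ}
    (hR : R = 1 / 3 + (1 / 3) * (19 + 3 * √33) ^ ((1 : ℝ) / 3) +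
      (1 / 3) * (19 - 3 * √33) ^ ((1 : ℝ) / 3)) :
    R ^ 3 - R ^ 2 - R - 1 = 0 := by
  have plus_nonneg : 0 ≤ 19 + 3 * √33 := by positivity
  have minus_nonneg : 0 ≤ 19 - 3 * √33 := sub_nonneg.2 three_mul_sqrt_thirtyThree_lt.le
  have product_eq : (19 + 3 * √33) * (19 - 3 * √33) = 4 ^ 3 := by
    linear_combination -9 * sq_sqrt (show (0 : ℝ) ≤ 33 by norm_num)
  have rpow_product : ((19 + 3 * √33) * (19 - 3 * √33)) ^ ((1 : ℝ) / 3) = 4 := by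
    rw [product_eq]
    simpa using pow_rpow_inv_natCast (show (0 : ℝ) ≤ 4 by norm_num) three_ne_zero
  have sum_eq : (19 + 3 * √33) ^ ((1 : ℝ) / 3) + (19 - 3 * √33) ^ ((1 : ℝ) / 3) = 3 * R - 1 := by
    linear_combination -3 * hR
  have depressed : (3 * R - 1) ^ 3 = 12 * (3 * R - 1) + 38 := by
    have cardano := rpow_one_third_add_pow_three plus_nonneg minus_nonneg
    rw [rpow_product, sum_eq] at cardano
    linear_combination cardano
  linear_combination depressed / 27

end Cardano

section AlphaBeta

variable {x y : ℝ}

lemma alphaF_denom_pos (hx : 0 ≤ x) (hy : 0 ≤ y) :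
    0 < (y + 1) * (3 * x ^ 2 * y + 4 * x * y + 2 * x + y + 1) := by
  positivity

lemma alphaF_lt_one_iff (hx : 0 ≤ x) (hy : 0 ≤ y) :
    alphaF x y < 1 ↔ (x * y) ^ 2 < (1 + y) ^ 2 + x * y := by
  have gap : (y + 1) * (3 * x ^ 2 * y + 4 * x * y + 2 * x + y + 1) -
      x * (x ^ 2 * y ^ 2 + 4 * x * y ^ 2 + 3 * y ^ 2 + 2 * x * y + 3 * y + 1) =
      (x + 1) * ((1 + y) ^ 2 + x * y - (x * y) ^ 2) := by
    ring
  rw [alphaF, div_lt_one (alphaF_denom_pos hx hy), ← sub_pos, gap,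
    mul_pos_iff_of_pos_left (by positivity), sub_pos]

lemma two_mul_betaF_lt_alphaF_iff (hx : 0 < x) (hy : 0 ≤ y) :
    2 * betaF x y < alphaF x y ↔ (x * y) ^ 2 < (1 + y) ^ 2 + x * y + (x + 1) * y := by
  have gap : x * (x ^ 2 * y ^ 2 + 4 * x * y ^ 2 + 3 * y ^ 2 + 2 * x * y + 3 * y + 1) -
      2 * (x * (x + 1) ^ 2 * y ^ 2) =
      x * ((1 + y) ^ 2 + x * y + (x + 1) * y - (x * y) ^ 2) := by
    ring
  rw [alphaF, betaF, ← mul_div_assoc, div_lt_div_iff_of_pos_right (alphaF_denom_pos hx.le hy),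
    ← sub_pos, gap, mul_pos_iff_of_pos_left hx, sub_pos]

end AlphaBeta

/-- Remark 3.3: the cubic `R³ - R² - R - 1 = 0` has exactly one positive real root, namely
`R₀ = 1/3 + (1/3)∛(19+3√33) + (1/3)∛(19-3√33) ≈ 1.839`, and for all `0 < x < R₀`,
`0 < y < R₀` one has `2β(x,y) < α(x,y) < 1`. -/
theorem cubic_root_and_two_beta_lt_alpha (R0 : ℝ)
    (hR0 : R0 = 1/3 + (1/3)*(19 + 3*Real.sqrt 33) ^ ((1:ℝ)/3)
        + (1/3)*(19 - 3*Real.sqrt 33) ^ ((1:ℝ)/3)) :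
    (0 < R0 ∧ R0^3 - R0^2 - R0 - 1 = 0 ∧
      ∀ x : ℝ, 0 < x → x^3 - x^2 - x - 1 = 0 → x = R0) ∧
    (∀ x y : ℝ, 0 < x → x < R0 → 0 < y → y < R0 →
      2*betaF x y < alphaF x y ∧ alphaF x y < 1) := by
  have hR0_pos : 0 < R0 := hR0 ▸ cardano_root_pos
  have hR0_root : R0 ^ 3 - R0 ^ 2 - R0 - 1 = 0 := cubic_cardano_root_eq_zero hR0
  refine ⟨⟨hR0_pos, hR0_root, fun x hx hx_root ↦
    eq_of_pos_of_cubic_eq_zero hx hR0_pos hx_root hR0_root⟩, fun x y hx hxR hy hyR ↦ ?_⟩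
  have bound : (x * y) ^ 2 < (1 + y) ^ 2 + x * y :=
    sq_mul_lt_of_lt_root hR0_root hx.le hxR hy.le hyR.le
  have slack_pos : 0 < (x + 1) * y := by positivity
  exact ⟨(two_mul_betaF_lt_alphaF_iff hx hy.le).2 (bound.trans (lt_add_of_pos_right _ slack_pos)),
    (alphaF_lt_one_iff hx.le hy.le).2 bound⟩
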